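/- Let p, q ∈ M be projections and x ∈ M arbitrary. Then ‖x − qxp‖₂ ≤ ‖(1 − q)x‖₂ + ‖x(1 − p)‖₂, and consequently ‖x − qxp‖₂ ≤ ‖xx* − q‖₂^{1/2} + ‖x*x − p‖₂^{1/2}. -/

import Mathlib

/-!
Write `x - q x p = (1 - q) x + q (x (1 - p))`. The triangle inequality for the 2-norm, together with
`‖q y‖₂ ≤ ‖y‖₂` for a projection `q`, gives the first inequality.

For the second, traciality and `(1 - q) q = 0` give
`‖(1 - q) x‖₂² = τ((1 - q) x x*) = τ((1 - q) (x x* - q))`, which by Cauchy–Schwarz is at most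
`‖1 - q‖₂ ‖x x* - q‖₂ ≤ ‖x x* - q‖₂`; the term `‖x (1 - p)‖₂` is the same quantity for
`x*` and `p`.

Cauchy–Schwarz (`re_cross_le`) is proved for the symmetrized real form
`Re τ(a* b) + Re τ(b* a)`, so that `τ(a*) = conj (τ a)` is never needed.
-/

open scoped ComplexOrder

/-- The tracial 2-norm `‖x‖₂ = (τ(x*x))^{1/2}` associated to a linear functional `τ`. -/
noncomputable def tnorm {M : Type*} [Ring M] [StarRing M] [Algebra ℂ M]
    (τ : M →ₗ[ℂ] ℂ) (x : M) : ℝ :=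
  Real.sqrt (τ (star x * x)).re

section TracialNorm

variable {M : Type*} [CStarAlgebra M] (τ : M →ₗ[ℂ] ℂ)

lemma re_nonneg_of_pos (hτpos : ∀ x : M, 0 ≤ τ (star x * x)) (x : M) :
    0 ≤ (τ (star x * x)).re :=
  (Complex.le_def.1 (hτpos x)).1

lemma tnorm_sq (hτpos : ∀ x : M, 0 ≤ τ (star x * x)) (x : M) :
    tnorm τ x ^ 2 = (τ (star x * x)).re :=
  Real.sq_sqrt (re_nonneg_of_pos τ hτpos x)

lemma tnorm_nonneg (x : M) : 0 ≤ tnorm τ x := Real.sqrt_nonneg _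

/-- Cauchy–Schwarz for the symmetrized real part of `(a, b) ↦ τ(a* b)`. -/
lemma re_cross_le (hτpos : ∀ x : M, 0 ≤ τ (star x * x)) (a b : M) :
    (τ (star a * b)).re + (τ (star b * a)).re ≤ 2 * (tnorm τ a * tnorm τ b) := by
  have key : ∀ t : ℝ, 0 ≤ (τ (star b * b)).re * (t * t)
      + ((τ (star a * b)).re + (τ (star b * a)).re) * t + (τ (star a * a)).re := by
    intro t
    have h := re_nonneg_of_pos τ hτpos (a + (t : ℂ) • b)
    simp only [star_add, star_smul, add_mul, mul_add, smul_mul_assoc, mul_smul_comm, map_add,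
      map_smul, Complex.add_re, smul_eq_mul, Complex.star_def, Complex.conj_ofReal,
      Complex.re_ofReal_mul] at h
    linarith
  have hd := discrim_le_zero key
  rw [discrim, ← tnorm_sq τ hτpos a, ← tnorm_sq τ hτpos b] at hd
  have h0 := mul_nonneg (tnorm_nonneg τ a) (tnorm_nonneg τ b)
  exact le_of_sq_le_sq (by nlinarith) (by positivity)

lemma tnorm_add_le (hτpos : ∀ x : M, 0 ≤ τ (star x * x)) (a b : M) :
    tnorm τ (a + b) ≤ tnorm τ a + tnorm τ b := by
  have h0 := add_nonneg (tnorm_nonneg τ a) (tnorm_nonneg τ b)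
  have h := tnorm_sq τ hτpos (a + b)
  simp only [star_add, add_mul, mul_add, map_add, Complex.add_re] at h
  have hc := re_cross_le τ hτpos a b
  have ha := tnorm_sq τ hτpos a
  have hb := tnorm_sq τ hτpos b
  exact le_of_sq_le_sq (by nlinarith) h0

lemma star_proj_mul_mul {q : M} (hq1 : star q = q) (hq2 : q * q = q) (y : M) :
    star (q * y) * (q * y) = star y * (q * y) := by
  rw [star_mul, hq1, mul_assoc, ← mul_assoc q q y, hq2]

lemma one_sub_proj_mul {q : M} (hq2 : q * q = q) : (1 - q) * (1 - q) = 1 - q := by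
  simp [sub_mul, mul_sub, hq2]

lemma tnorm_proj_mul_le (hτpos : ∀ x : M, 0 ≤ τ (star x * x)) {q : M} (hq1 : star q = q)
    (hq2 : q * q = q) (y : M) : tnorm τ (q * y) ≤ tnorm τ y := by
  apply Real.sqrt_le_sqrt
  have h := re_nonneg_of_pos τ hτpos ((1 - q) * y)
  rw [star_proj_mul_mul (by simp [hq1]) (one_sub_proj_mul hq2), sub_mul, mul_sub, one_mul, map_sub,
    Complex.sub_re] at h
  rw [star_proj_mul_mul hq1 hq2]
  linarith

lemma tnorm_star (hτtr : ∀ x y : M, τ (x * y) = τ (y * x)) (x : M) :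
    tnorm τ (star x) = tnorm τ x := by
  rw [tnorm, tnorm, star_star, hτtr]

lemma tnorm_one_sub_mul_le (hτ1 : τ 1 = 1) (hτpos : ∀ x : M, 0 ≤ τ (star x * x))
    (hτtr : ∀ x y : M, τ (x * y) = τ (y * x)) {q : M} (hq1 : star q = q) (hq2 : q * q = q)
    (x : M) : tnorm τ ((1 - q) * x) ≤ Real.sqrt (tnorm τ (x * star x - q)) := by
  apply Real.le_sqrt_of_sq_le
  have hs : star (1 - q) = 1 - q := by simp [hq1]
  have hi := one_sub_proj_mul hq2
  have hone : tnorm τ (1 : M) = 1 := by simp [tnorm, hτ1]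
  have hle : tnorm τ (1 - q) ≤ 1 := by
    simpa [hone] using tnorm_proj_mul_le τ hτpos hs hi 1
  have hbs : star (x * star x - q) = x * star x - q := by simp [hq1]
  have hcs := re_cross_le τ hτpos (1 - q) (x * star x - q)
  rw [hbs, hs, hτtr (x * star x - q)] at hcs
  have he : τ (star ((1 - q) * x) * ((1 - q) * x)) = τ ((1 - q) * (x * star x - q)) := by
    have hz : (1 - q) * q = 0 := by simp [sub_mul, hq2]
    rw [star_proj_mul_mul hs hi, hτtr, mul_sub (1 - q), hz, sub_zero, mul_assoc]
  rw [tnorm_sq τ hτpos, he]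
  nlinarith [tnorm_nonneg τ (x * star x - q)]

end TracialNorm

theorem stmt4 {M : Type*} [CStarAlgebra M]
    (τ : M →ₗ[ℂ] ℂ) (hτ1 : τ 1 = 1)
    (hτpos : ∀ x : M, 0 ≤ τ (star x * x))
    (hτtr : ∀ x y : M, τ (x * y) = τ (y * x))
    (p q : M) (hp1 : star p = p) (hp2 : p * p = p) (hq1 : star q = q) (hq2 : q * q = q)
    (x : M) :
    tnorm τ (x - q * x * p) ≤ tnorm τ ((1 - q) * x) + tnorm τ (x * (1 - p)) ∧
      tnorm τ (x - q * x * p) ≤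
        Real.sqrt (tnorm τ (x * star x - q)) + Real.sqrt (tnorm τ (star x * x - p)) := by
  have first : tnorm τ (x - q * x * p) ≤ tnorm τ ((1 - q) * x) + tnorm τ (x * (1 - p)) := by
    have hdec : x - q * x * p = (1 - q) * x + q * (x * (1 - p)) := by noncomm_ring
    rw [hdec]
    exact (tnorm_add_le τ hτpos _ _).trans
      (add_le_add le_rfl (tnorm_proj_mul_le τ hτpos hq1 hq2 _))
  refine ⟨first, first.trans (add_le_add
    (tnorm_one_sub_mul_le τ hτ1 hτpos hτtr hq1 hq2 x) ?_)⟩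
  have h := tnorm_one_sub_mul_le τ hτ1 hτpos hτtr hp1 hp2 (star x)
  rw [← tnorm_star τ hτtr] at h
  simpa [hp1] using h
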